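/- arXiv:2411.03809 — 2 statements merged into one kernel-verified Lean document; each statement's English description precedes it below -/
import Mathlib

section
/- Let S : [0,∞) → ℂ be Lipschitz continuous. Then its Laplace transform L{S;s} = ∫_0^∞ e^{-su} S(u) du converges for Re s > 0, and if L{S;·} admits a continuous extension to the closed half-plane {s ∈ ℂ : Re s ≥ 0} (i.e. there exists a continuous function on {Re s ≥ 0} agreeing with L{S;·} on {Re s > 0}), then S(x) → 0 as x → ∞. -/
open MeasureTheory Filter

open Set Complex
open scoped FourierTransform SchwartzMap Topology Real

/-!
Smooth `S` against the translates of `φ = 𝓕 ψ`, where `ψ` is smooth, compactly supported and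
`ψ 0 = ∫ φ = 1`. Parseval's identity on the line `Re s = σ`, followed by `σ → 0⁺`, shows that the
mean `∫₀^∞ φ(u - x) S(u) du` is the inverse Fourier transform at `x` of the compactly supported
continuous function `t ↦ ψ(t) g(2πit)`, where `g` is the extension of the Laplace transform. By the
Riemann–Lebesgue lemma the mean tends to `0` as `x → ∞`. The Lipschitz condition bounds the distance
from the mean to `S(x)` by `(K + ‖S(0)‖ / x) ∫ |y| |φ(y)| dy`, and dilating `ψ` makes this first
moment arbitrarily small.
-/

section LaplaceTransform

variable {E : Type*} [NormedAddCommGroup E] [NormedSpace ℂ E]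

/-- The Laplace transform `∫₀^∞ e^{-su} S(u) du` of a vector-valued function on the half-line.
It has the junk value `0` wherever the integral does not converge absolutely. -/
noncomputable def laplaceTransform (S : ℝ → E) (s : ℂ) : E :=
  ∫ u in Ioi (0 : ℝ), exp (-s * u) • S u

theorem integrableOn_exp_neg_mul_smul_of_norm_le {S : ℝ → E} {a b : ℝ}
    (hmeas : AEStronglyMeasurable S (volume.restrict (Ioi 0)))
    (hle : ∀ u > 0, ‖S u‖ ≤ a + b * u) {s : ℂ} (hs : 0 < s.re) :
    IntegrableOn (fun u : ℝ => exp (-s * u) • S u) (Ioi 0) := by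
  have hexp : IntegrableOn (fun u : ℝ => Real.exp (-s.re * u)) (Ioi 0) :=
    integrableOn_exp_mul_Ioi (neg_neg_of_pos hs) 0
  have hmul_exp : IntegrableOn (fun u : ℝ => u * Real.exp (-s.re * u)) (Ioi 0) := by
    simpa only [Real.rpow_one] using
      integrableOn_rpow_mul_exp_neg_mul_rpow (s := 1) (p := 1) (by norm_num) one_pos hs
  refine ((hexp.const_mul a).add (hmul_exp.const_mul b)).mono'
    ((Continuous.aestronglyMeasurable (by fun_prop)).smul hmeas) ?_
  refine ae_restrict_of_forall_mem measurableSet_Ioi fun u hu => ?_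
  calc ‖exp (-s * u) • S u‖ = Real.exp (-s.re * u) * ‖S u‖ := by
        rw [norm_smul, norm_exp, re_mul_ofReal, neg_re]
    _ ≤ Real.exp (-s.re * u) * (a + b * u) := by gcongr; exact hle u hu
    _ = a * Real.exp (-s.re * u) + b * (u * Real.exp (-s.re * u)) := by ring

theorem tendsto_laplaceTransform_nhdsGT_zero {S : ℝ → E} (hS : IntegrableOn S (Ioi 0)) :
    Tendsto (fun σ : ℝ => laplaceTransform S σ) (𝓝[>] 0) (𝓝 (∫ u in Ioi (0 : ℝ), S u)) := by
  refine tendsto_integral_filter_of_dominated_convergence (fun u => ‖S u‖)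
    (.of_forall fun σ => (Continuous.aestronglyMeasurable (by fun_prop)).smul hS.1) ?_ hS.norm
    (.of_forall fun u => ?_)
  · filter_upwards [self_mem_nhdsWithin] with σ hσ
    refine ae_restrict_of_forall_mem measurableSet_Ioi fun u hu => ?_
    rw [norm_smul, norm_exp, re_mul_ofReal, neg_re, ofReal_re]
    refine mul_le_of_le_one_left (norm_nonneg _) (Real.exp_le_one_iff.2 ?_)
    exact mul_nonpos_of_nonpos_of_nonneg (neg_nonpos.2 (le_of_lt hσ)) (le_of_lt hu)
  · have hcont : Continuous fun σ : ℝ => exp (-(σ : ℂ) * u) • S u := by fun_prop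
    simpa using (hcont.tendsto 0).mono_left nhdsWithin_le_nhds

theorem fourier_indicator_exp_neg_mul_smul (S : ℝ → E) (σ t : ℝ) :
    𝓕 ((Ioi 0).indicator fun u : ℝ => exp (-σ * u) • S u) t =
      laplaceTransform S (σ + 2 * π * t * I) := by
  rw [Real.fourier_real_eq_integral_exp_smul, laplaceTransform,
    ← integral_indicator measurableSet_Ioi]
  congr 1 with u
  rw [← indicator_smul_apply (Ioi 0) (fun u : ℝ => exp (↑(-2 * π * u * t) * I))]
  congr 1 with u
  rw [smul_smul, ← exp_add]
  push_cast
  ring_nf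

end LaplaceTransform

section Fourier

variable {V E : Type*} [NormedAddCommGroup V] [InnerProductSpace ℝ V] [FiniteDimensional ℝ V]
  [MeasurableSpace V] [BorelSpace V] [NormedAddCommGroup E] [NormedSpace ℂ E]

theorem integral_fourier_comp_sub_right_smul_eq_fourierInv [CompleteSpace E] {ψ : V → ℂ}
    {f : V → E} (hψ : Integrable ψ) (hf : Integrable f) (x : V) :
    ∫ u, 𝓕 ψ (u - x) • f u = 𝓕⁻ (fun t => ψ t • 𝓕 f t) x := by
  have htranslate : 𝓕 (fun y => f (y + x)) = fun t => 𝐞 (inner ℝ x t) • 𝓕 f t :=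
    VectorFourier.fourierIntegral_comp_add_right 𝐞 volume (innerₗ V) f x
  calc ∫ u, 𝓕 ψ (u - x) • f u = ∫ y, 𝓕 ψ y • f (y + x) := by
        simpa using (integral_add_right_eq_self (fun u => 𝓕 ψ (u - x) • f u) x).symm
    _ = ∫ t, ψ t • 𝓕 (fun y => f (y + x)) t := by
        have := VectorFourier.integral_fourierIntegral_smul_eq_flip (L := innerₗ V)
          Real.continuous_fourierChar continuous_inner hψ (hf.comp_add_right x)
        rwa [flip_innerₗ] at this
    _ = 𝓕⁻ (fun t => ψ t • 𝓕 f t) x := by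
        rw [Real.fourierInv_eq, htranslate]
        simp only [smul_comm (ψ _), real_inner_comm]

theorem continuousOn_fourierInv_smul_of_hasCompactSupport {X : Type*} [TopologicalSpace X]
    {s : Set X} {ψ : V → ℂ} {G : X → V → E} (hψ : Continuous ψ) (hψ' : HasCompactSupport ψ)
    (hG : ContinuousOn (Function.uncurry G) (s ×ˢ univ)) (x : V) :
    ContinuousOn (fun p => 𝓕⁻ (fun t => ψ t • G p t) x) s := by
  simp only [Real.fourierInv_eq]
  refine continuousOn_integral_of_compact_support hψ' ?_ fun p t _ ht => ?_
  · have hchar : Continuous fun q : X × V => 𝐞 (inner ℝ q.2 x) :=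
      Real.continuous_fourierChar.comp (by fun_prop)
    exact hchar.continuousOn.smul ((hψ.comp continuous_snd).continuousOn.smul hG)
  · rw [image_eq_zero_of_notMem_tsupport ht, zero_smul, smul_zero]

theorem integral_fourier_schwartzMap [CompleteSpace E] (ψ : 𝓢(V, E)) :
    ∫ y, 𝓕 ψ y = ψ 0 := by
  have : (𝓕⁻ (𝓕 ψ) : 𝓢(V, E)) 0 = ψ 0 := by rw [FourierTransform.fourierInv_fourier_eq]
  simpa [-FourierTransform.fourierInv_fourier_eq, SchwartzMap.fourierInv_coe,
    Real.fourierInv_eq] using this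

theorem tendsto_fourierInv_atTop (f : ℝ → E) : Tendsto (𝓕⁻ f) atTop (𝓝 0) := by
  have hneg : Tendsto (fun x : ℝ => -x) atTop (cocompact ℝ) :=
    tendsto_neg_atTop_atBot.mono_right atBot_le_cocompact
  exact ((Real.zero_at_infty_fourier f).comp hneg).congr fun x =>
    (Real.fourierInv_eq_fourier_neg f x).symm

theorem fourier_comp_mul_left (f : ℝ → E) {a : ℝ} (ha : a ≠ 0) (w : ℝ) :
    𝓕 (fun t => f (a * t)) w = |a⁻¹| • 𝓕 f (a⁻¹ * w) := by
  rw [Real.fourier_real_eq, Real.fourier_real_eq, ← Measure.integral_comp_mul_left]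
  congr 1 with t
  rw [show a * t * (a⁻¹ * w) = t * w by field_simp]

theorem integral_norm_mul_norm_fourier_comp_mul_left (f : ℝ → E) {a : ℝ} (ha : a ≠ 0) :
    ∫ y, ‖y‖ * ‖𝓕 (fun t => f (a * t)) y‖ = |a| * ∫ y, ‖y‖ * ‖𝓕 f y‖ := by
  have := Measure.integral_comp_mul_left (fun z : ℝ => ‖z‖ * ‖𝓕 f z‖) a⁻¹
  rw [inv_inv, smul_eq_mul] at this
  rw [← this]
  congr 1 with y
  rw [fourier_comp_mul_left f ha, norm_smul, norm_mul, Real.norm_eq_abs |_|, abs_abs,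
    Real.norm_eq_abs a⁻¹]
  ring

theorem exists_schwartzMap_integral_norm_mul_norm_fourier_lt {ε : ℝ} (hε : 0 < ε) :
    ∃ ψ : 𝓢(ℝ, ℂ), HasCompactSupport ψ ∧ ∫ y, 𝓕 ψ y = 1 ∧ ∫ y, ‖y‖ * ‖𝓕 ψ y‖ < ε := by
  let b : ContDiffBump (0 : ℝ) := ⟨1, 2, one_pos, one_lt_two⟩
  set M := ∫ y, ‖y‖ * ‖𝓕 (fun t => (b t : ℂ)) y‖ with hM
  have hM0 : 0 ≤ M := integral_nonneg fun y => by positivity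
  let a := ε / (M + 1)
  have ha : 0 < a := div_pos hε (add_pos_of_nonneg_of_pos hM0 one_pos)
  have hsupp : HasCompactSupport fun t : ℝ => (b (a * t) : ℂ) :=
    (b.hasCompactSupport.comp_smul ha.ne').comp_left (g := ((↑) : ℝ → ℂ)) ofReal_zero
  have hsmooth : ContDiff ℝ ((⊤ : ℕ∞) : WithTop ℕ∞) fun t : ℝ => (b (a * t) : ℂ) :=
    ofRealCLM.contDiff.comp (b.contDiff.comp (contDiff_const.mul contDiff_id))
  let ψ : 𝓢(ℝ, ℂ) := hsupp.toSchwartzMap hsmooth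
  refine ⟨ψ, hsupp, ?_, ?_⟩
  · have hb : b 0 = 1 := b.one_of_mem_closedBall (by simp [b])
    rw [integral_fourier_schwartzMap]
    change ((b (a * 0) : ℝ) : ℂ) = 1
    rw [mul_zero, hb, ofReal_one]
  · calc ∫ y, ‖y‖ * ‖𝓕 ψ y‖ = a * M := by
          rw [← abs_of_pos ha, hM,
            ← integral_norm_mul_norm_fourier_comp_mul_left _ ha.ne', SchwartzMap.fourier_coe]
          rfl
      _ = ε * M / (M + 1) := by ring
      _ < ε := by rw [div_lt_iff₀ (by positivity)]; nlinarith

end Fourier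

section Mollification

variable {V E : Type*} [NormedAddCommGroup V] [MeasurableSpace V] {μ : Measure V}
  [NormedAddCommGroup E] [NormedSpace ℂ E] {φ : V → ℂ} {f : V → E} {c : E} {C : ℝ}

theorem integrable_smul_of_norm_sub_le (hφ : Integrable φ μ)
    (hφ' : Integrable (fun y => ‖y‖ * ‖φ y‖) μ) (hf : AEStronglyMeasurable f μ)
    (hfc : ∀ y, ‖f y - c‖ ≤ C * ‖y‖) : Integrable (fun y => φ y • f y) μ := by
  refine ((hφ'.const_mul C).add (hφ.norm.const_mul ‖c‖)).mono' (hφ.1.smul hf)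
    (.of_forall fun y => ?_)
  calc ‖φ y • f y‖ = ‖φ y‖ * ‖f y - c + c‖ := by rw [norm_smul, sub_add_cancel]
    _ ≤ ‖φ y‖ * (C * ‖y‖ + ‖c‖) := by gcongr; exact norm_add_le_of_le (hfc y) le_rfl
    _ = C * (‖y‖ * ‖φ y‖) + ‖c‖ * ‖φ y‖ := by ring

theorem norm_integral_smul_sub_le [CompleteSpace E] (hφ : Integrable φ μ)
    (hφ' : Integrable (fun y => ‖y‖ * ‖φ y‖) μ) (hφ1 : ∫ y, φ y ∂μ = 1)
    (hf : AEStronglyMeasurable f μ) (hfc : ∀ y, ‖f y - c‖ ≤ C * ‖y‖) :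
    ‖(∫ y, φ y • f y ∂μ) - c‖ ≤ C * ∫ y, ‖y‖ * ‖φ y‖ ∂μ := by
  have hdiff : (∫ y, φ y • f y ∂μ) - c = ∫ y, φ y • (f y - c) ∂μ := by
    simp_rw [smul_sub]
    rw [integral_sub (integrable_smul_of_norm_sub_le hφ hφ' hf hfc) (hφ.smul_const c),
      integral_smul_const, hφ1, one_smul]
  rw [hdiff, ← integral_const_mul]
  refine norm_integral_le_of_norm_le (hφ'.const_mul C) (.of_forall fun y => ?_)
  calc ‖φ y • (f y - c)‖ = ‖f y - c‖ * ‖φ y‖ := by rw [norm_smul, mul_comm]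
    _ ≤ C * ‖y‖ * ‖φ y‖ := by gcongr; exact hfc y
    _ = C * (‖y‖ * ‖φ y‖) := mul_assoc _ _ _

end Mollification

section BoundaryValues

variable {E : Type*} [NormedAddCommGroup E] [NormedSpace ℂ E] [CompleteSpace E]

theorem laplaceTransform_fourier_smul_eq_fourierInv {S : ℝ → E} {ψ : ℝ → ℂ} (hψ : Integrable ψ)
    {σ : ℝ} (hS : IntegrableOn (fun u : ℝ => exp (-σ * u) • S u) (Ioi 0)) (x : ℝ) :
    laplaceTransform (fun u => 𝓕 ψ (u - x) • S u) σ =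
      𝓕⁻ (fun t : ℝ => ψ t • laplaceTransform S (σ + 2 * π * t * I)) x := by
  simp_rw [← fourier_indicator_exp_neg_mul_smul]
  rw [← integral_fourier_comp_sub_right_smul_eq_fourierInv hψ
    (hS.integrable_indicator measurableSet_Ioi), laplaceTransform,
    ← integral_indicator measurableSet_Ioi]
  simp_rw [← indicator_smul_apply (Ioi (0 : ℝ)) (fun u => 𝓕 ψ (u - x)), smul_comm (exp _)]

theorem setIntegral_fourier_smul_eq_fourierInv {S : ℝ → E} {g : ℂ → E} {ψ : ℝ → ℂ}
    (hS : ∀ σ : ℝ, 0 < σ → IntegrableOn (fun u : ℝ => exp (-σ * u) • S u) (Ioi 0))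
    (hg : ContinuousOn g {s | 0 ≤ s.re}) (hgS : ∀ s, 0 < s.re → g s = laplaceTransform S s)
    (hψ : Continuous ψ) (hψ' : HasCompactSupport ψ) {x : ℝ}
    (hψS : IntegrableOn (fun u => 𝓕 ψ (u - x) • S u) (Ioi 0)) :
    ∫ u in Ioi 0, 𝓕 ψ (u - x) • S u = 𝓕⁻ (fun t : ℝ => ψ t • g (2 * π * t * I)) x := by
  have hcont : ContinuousOn (fun σ : ℝ => 𝓕⁻ (fun t : ℝ => ψ t • g (σ + 2 * π * t * I)) x)
      (Ici 0) := by
    refine continuousOn_fourierInv_smul_of_hasCompactSupport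
      (G := fun σ t : ℝ => g (σ + 2 * π * t * I)) hψ hψ' ?_ x
    exact hg.comp (Continuous.continuousOn (by fun_prop)) fun p hp => by simpa using hp.1
  have hboundary : Tendsto (fun σ : ℝ => 𝓕⁻ (fun t : ℝ => ψ t • g (σ + 2 * π * t * I)) x)
      (𝓝[>] 0) (𝓝 (𝓕⁻ (fun t : ℝ => ψ t • g (2 * π * t * I)) x)) := by
    simpa using (hcont 0 self_mem_Ici).tendsto.mono_left (nhdsWithin_mono 0 Ioi_subset_Ici_self)
  refine tendsto_nhds_unique_of_eventuallyEq (tendsto_laplaceTransform_nhdsGT_zero hψS)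
    hboundary ?_
  filter_upwards [self_mem_nhdsWithin] with σ hσ
  rw [laplaceTransform_fourier_smul_eq_fourierInv (hψ.integrable_of_hasCompactSupport hψ')
    (hS σ hσ)]
  refine congrArg (fun f : ℝ → E => 𝓕⁻ f x) (funext fun t => ?_)
  rw [hgS _ (by simpa using hσ)]

theorem tendsto_setIntegral_fourier_smul_atTop {S : ℝ → E} {g : ℂ → E} {ψ : ℝ → ℂ}
    (hS : ∀ σ : ℝ, 0 < σ → IntegrableOn (fun u : ℝ => exp (-σ * u) • S u) (Ioi 0))
    (hg : ContinuousOn g {s | 0 ≤ s.re}) (hgS : ∀ s, 0 < s.re → g s = laplaceTransform S s)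
    (hψ : Continuous ψ) (hψ' : HasCompactSupport ψ)
    (hψS : ∀ᶠ x in atTop, IntegrableOn (fun u => 𝓕 ψ (u - x) • S u) (Ioi 0)) :
    Tendsto (fun x => ∫ u in Ioi 0, 𝓕 ψ (u - x) • S u) atTop (𝓝 0) :=
  (tendsto_fourierInv_atTop fun t : ℝ => ψ t • g (2 * π * t * I)).congr' <|
    hψS.mono fun _ hx => (setIntegral_fourier_smul_eq_fourierInv hS hg hgS hψ hψ' hx).symm

end BoundaryValues

section Lipschitz

variable {E : Type*} [NormedAddCommGroup E] {S : ℝ → E} {K : NNReal}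

theorem norm_le_of_lipschitzOnWith_Ici (hS : LipschitzOnWith K S (Ici 0)) {u : ℝ} (hu : 0 ≤ u) :
    ‖S u‖ ≤ ‖S 0‖ + K * u := by
  have hdiff := hS.norm_sub_le hu self_mem_Ici
  rw [sub_zero, Real.norm_of_nonneg hu] at hdiff
  exact norm_le_norm_add_norm_sub' _ _ |>.trans (by gcongr)

theorem aestronglyMeasurable_of_lipschitzOnWith_Ici (hS : LipschitzOnWith K S (Ici 0)) :
    AEStronglyMeasurable S (volume.restrict (Ioi 0)) :=
  (hS.continuousOn.mono Ioi_subset_Ici_self).aestronglyMeasurable measurableSet_Ioi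

theorem norm_indicator_add_right_sub_le (hS : LipschitzOnWith K S (Ici 0)) {x : ℝ} (hx : 0 < x)
    (y : ℝ) : ‖(Ioi 0).indicator S (y + x) - S x‖ ≤ (K + ‖S 0‖ / x) * ‖y‖ := by
  by_cases hyx : 0 < y + x
  · calc ‖(Ioi 0).indicator S (y + x) - S x‖ = ‖S (y + x) - S x‖ := by
          rw [indicator_of_mem (mem_Ioi.2 hyx)]
      _ ≤ K * ‖y + x - x‖ := hS.norm_sub_le hyx.le hx.le
      _ ≤ (K + ‖S 0‖ / x) * ‖y‖ := by
          rw [add_sub_cancel_right]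
          gcongr
          exact le_add_of_nonneg_right (by positivity)
  · -- The extension by zero jumps at `0`; since `x ≤ ‖y‖`, the slope `‖S 0‖ / x` absorbs the jump.
    have hxy : x ≤ ‖y‖ := by
      rw [Real.norm_eq_abs]
      linarith [neg_le_abs y]
    calc ‖(Ioi 0).indicator S (y + x) - S x‖ = ‖S x‖ := by
          rw [indicator_of_notMem (by simpa using hyx), zero_sub, norm_neg]
      _ ≤ ‖S 0‖ + K * x := norm_le_of_lipschitzOnWith_Ici hS hx.le
      _ = (K + ‖S 0‖ / x) * x := by field_simp; ring
      _ ≤ (K + ‖S 0‖ / x) * ‖y‖ := by gcongr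

theorem aestronglyMeasurable_indicator_add_right (hS : LipschitzOnWith K S (Ici 0)) (x : ℝ) :
    AEStronglyMeasurable (fun y => (Ioi 0).indicator S (y + x)) :=
  ((aestronglyMeasurable_indicator_iff measurableSet_Ioi).2
    (aestronglyMeasurable_of_lipschitzOnWith_Ici hS)).comp_measurePreserving
    (measurePreserving_add_right volume x)

variable [NormedSpace ℂ E]

theorem indicator_comp_sub_right_smul_add_right (φ : ℝ → ℂ) (S : ℝ → E) (x y : ℝ) :
    (Ioi 0).indicator (fun u => φ (u - x) • S u) (y + x) =
      φ y • (Ioi 0).indicator S (y + x) := by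
  rw [indicator_smul_apply, add_sub_cancel_right]

variable {φ : ℝ → ℂ}

theorem integrableOn_comp_sub_right_smul (hS : LipschitzOnWith K S (Ici 0)) (hφ : Integrable φ)
    (hφ' : Integrable fun y => ‖y‖ * ‖φ y‖) {x : ℝ} (hx : 0 < x) :
    IntegrableOn (fun u => φ (u - x) • S u) (Ioi 0) := by
  have htranslate : Integrable fun y => φ y • (Ioi 0).indicator S (y + x) :=
    integrable_smul_of_norm_sub_le hφ hφ' (aestronglyMeasurable_indicator_add_right hS x)
      (norm_indicator_add_right_sub_le hS hx)
  simp_rw [← indicator_comp_sub_right_smul_add_right] at htranslate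
  rw [← integrable_indicator_iff measurableSet_Ioi]
  simpa only [sub_add_cancel] using htranslate.comp_sub_right x

theorem norm_setIntegral_comp_sub_right_smul_sub_le [CompleteSpace E]
    (hS : LipschitzOnWith K S (Ici 0)) (hφ : Integrable φ)
    (hφ' : Integrable fun y => ‖y‖ * ‖φ y‖) (hφ_one : ∫ y, φ y = 1) {x : ℝ} (hx : 0 < x) :
    ‖(∫ u in Ioi 0, φ (u - x) • S u) - S x‖ ≤ (K + ‖S 0‖ / x) * ∫ y, ‖y‖ * ‖φ y‖ := by
  rw [← integral_indicator measurableSet_Ioi, ← integral_add_right_eq_self _ x]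
  simp_rw [indicator_comp_sub_right_smul_add_right]
  exact norm_integral_smul_sub_le hφ hφ' hφ_one (aestronglyMeasurable_indicator_add_right hS x)
    (norm_indicator_add_right_sub_le hS hx)

theorem eventually_norm_lt_of_tendsto_setIntegral_smul [CompleteSpace E]
    (hS : LipschitzOnWith K S (Ici 0)) (hφ : Integrable φ)
    (hφ' : Integrable fun y => ‖y‖ * ‖φ y‖) (hφ_one : ∫ y, φ y = 1)
    (hmean : Tendsto (fun x => ∫ u in Ioi 0, φ (u - x) • S u) atTop (𝓝 0)) {r : ℝ}
    (hr : K * ∫ y, ‖y‖ * ‖φ y‖ < r) : ∀ᶠ x in atTop, ‖S x‖ < r := by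
  have hbound : Tendsto (fun x => ‖∫ u in Ioi 0, φ (u - x) • S u‖ +
      (K + ‖S 0‖ / x) * ∫ y, ‖y‖ * ‖φ y‖) atTop
      (𝓝 (‖(0 : E)‖ + (K + 0) * ∫ y, ‖y‖ * ‖φ y‖)) :=
    hmean.norm.add <|
      (tendsto_const_nhds.add (tendsto_const_nhds.div_atTop tendsto_id)).mul_const _
  rw [norm_zero, zero_add, add_zero] at hbound
  filter_upwards [hbound.eventually_lt_const hr, eventually_gt_atTop 0] with x hx hx0
  refine (norm_le_norm_add_norm_sub (∫ u in Ioi 0, φ (u - x) • S u) (S x)).trans_lt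
    (lt_of_le_of_lt ?_ hx)
  gcongr
  exact norm_setIntegral_comp_sub_right_smul_sub_le hS hφ hφ' hφ_one hx0

theorem stmt_0_general [CompleteSpace E] (S : ℝ → E) (K : NNReal)
    (hS : LipschitzOnWith K S (Ici 0)) :
    (∀ s : ℂ, 0 < s.re → IntegrableOn (fun u : ℝ => exp (-s * u) • S u) (Ioi 0)) ∧
    ((∃ g : ℂ → E, ContinuousOn g {s : ℂ | 0 ≤ s.re} ∧
        ∀ s : ℂ, 0 < s.re → g s = laplaceTransform S s) →
      Tendsto S atTop (𝓝 0)) := by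
  have hlaplace : ∀ s : ℂ, 0 < s.re → IntegrableOn (fun u : ℝ => exp (-s * u) • S u) (Ioi 0) :=
    fun s hs => integrableOn_exp_neg_mul_smul_of_norm_le
      (aestronglyMeasurable_of_lipschitzOnWith_Ici hS)
      (fun u hu => norm_le_of_lipschitzOnWith_Ici hS (le_of_lt hu)) hs
  refine ⟨hlaplace, ?_⟩
  rintro ⟨g, hg, hgS⟩
  refine NormedAddGroup.tendsto_nhds_zero.2 fun ε hε => ?_
  obtain ⟨ψ, hψ, hψ_one, hψ_moment⟩ :=
    exists_schwartzMap_integral_norm_mul_norm_fourier_lt (show 0 < ε / (K + 1) by positivity)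
  have hmoment : Integrable fun y : ℝ => ‖y‖ * ‖𝓕 ψ y‖ := by
    simpa only [pow_one] using SchwartzMap.integrable_pow_mul volume (𝓕 ψ : 𝓢(ℝ, ℂ)) 1
  have hmean : Tendsto (fun x => ∫ u in Ioi 0, 𝓕 ψ (u - x) • S u) atTop (𝓝 0) :=
    tendsto_setIntegral_fourier_smul_atTop (fun σ hσ => hlaplace σ hσ) hg hgS ψ.continuous hψ <|
      (eventually_gt_atTop 0).mono fun _ =>
        integrableOn_comp_sub_right_smul hS (𝓕 ψ).integrable hmoment
  refine eventually_norm_lt_of_tendsto_setIntegral_smul hS (𝓕 ψ).integrable hmoment hψ_one hmean ?_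
  calc K * ∫ y, ‖y‖ * ‖𝓕 ψ y‖ ≤ K * (ε / (K + 1)) := by gcongr
    _ = ε * K / (K + 1) := by ring
    _ < ε := by rw [div_lt_iff₀ (by positivity)]; linarith

end Lipschitz

/-- **Ingham–Karamata theorem.** If `S : [0,∞) → ℂ` is Lipschitz continuous, then its Laplace
transform converges on `Re s > 0`, and if the Laplace transform admits a continuous extension
to the closed half-plane `{Re s ≥ 0}`, then `S(x) → 0` as `x → ∞`. -/
theorem stmt_0 (S : ℝ → ℂ) (K : NNReal) (hS : LipschitzOnWith K S (Set.Ici 0)) :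
    (∀ s : ℂ, 0 < s.re →
      IntegrableOn (fun u : ℝ => Complex.exp (-s * u) * S u) (Set.Ioi 0)) ∧
    ((∃ g : ℂ → ℂ, ContinuousOn g {s : ℂ | 0 ≤ s.re} ∧
        ∀ s : ℂ, 0 < s.re → g s = ∫ u in Set.Ioi (0:ℝ), Complex.exp (-s * u) * S u) →
      Tendsto S atTop (nhds 0)) :=
  stmt_0_general S K hS
end

section
/- Let 0 < γ < 1. There exist a sequence of real-valued Schwartz functions φ_n : ℝ → ℝ (n ∈ ℕ), a constant C_γ > 0 depending only on γ, and constants C > 0 and A > 0 (A = 124 is admissible) such that for every n: (1) ∫_{-∞}^{∞} φ_n(y) dy = 1; (2) |φ_n(y)| ≤ C_γ exp(−|y|^γ) for all y ∈ ℝ; (3) y·φ_n(y) ≥ 0 for all y ∈ ℝ; (4) the Fourier transform φ̂_n is supported in [−1,1]; (5) sup_{t ∈ [−1,1]} |φ̂_n^{(j)}(t)| ≤ C A^j n^j for all j ≤ n. -/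
open MeasureTheory

/-!
The kernels are `φₙ(y) = y Qₙ(y - 1) / ∫ Qₙ`, where `Qₙ ≥ 0` is even and band-limited to `[-1, 1]`.
The factor `y` gives `φₙ` the sign of `y`, and evenness makes the integral of `y Qₙ(y - 1)` equal to
`∫ Qₙ`, because `∫ u Qₙ(u) du = 0`.

Take `Qₙ = P Sₙ`, where half of the band is spent on each factor. The factor `P` does not depend on
`n`: it is an infinite product of `sinc² (aᵢ x)`, whose total bandwidth `2 ∑ aᵢ` is finite, and
`aᵢ ~ i^(-1/δ)` with `γ < δ < 1` leaves about `|x|^δ` factors below `e⁻¹` at `x`, hence decay faster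
than `exp(-|x|^γ)`. The factor `Sₙ = sinc (x / 4N) ^ 2N`, `N = n + 1`, absorbs up to `N` powers of
`|x|` at the price of a factor `O(N)` for each of them, which bounds the moments of `Qₙ` and
therefore the derivatives of the transform; it stays above `1/2` on `[-1, 1]`, so `∫ Qₙ` is bounded
below uniformly in `n`.
-/

open Filter Topology
open scoped FourierTransform ContDiff SchwartzMap Convolution

namespace BandLimitedKernel

section BandLimited

variable {E : Type*} [NormedAddCommGroup E] [NormedSpace ℂ E]

/-- `f` has Fourier transform supported in the band `[-r, r]` of angular frequencies. Mathlib's `𝓕`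
uses the kernel `e^{-2πixξ}`, so `ξ` corresponds to the angular frequency `2πξ`. -/
def BandLimited (f : ℝ → E) (r : ℝ) : Prop :=
  ∀ ξ : ℝ, r < |2 * Real.pi * ξ| → 𝓕 f ξ = 0

lemma fourier_fourier_smul [CompleteSpace E] {g : ℝ → ℂ} {f : ℝ → E} (hg : Integrable g)
    (hf : Integrable f) (t : ℝ) :
    𝓕 (fun x => 𝓕 g x • f x) t = ∫ s, g s • 𝓕 f (t + s) := by
  have hmod : Integrable fun x => Real.fourierChar (-(x * t)) • f x := by
    simpa [mul_comm] using (Real.fourierIntegral_convergent_iff (f := f) t).2 hf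
  have hflip := VectorFourier.integral_fourierIntegral_smul_eq_flip (μ := volume) (ν := volume)
    (L := innerₗ ℝ) Real.continuous_fourierChar continuous_inner hg hmod
  rw [Real.fourier_real_eq]
  simp only [smul_comm _ (𝓕 g _)]
  refine hflip.trans (integral_congr_ae (.of_forall fun s => ?_))
  simp only [flip_innerₗ, VectorFourier.fourierIntegral, innerₗ_apply_apply, Real.fourier_real_eq,
    smul_smul, ← AddChar.map_add_eq_mul]
  congr! 4 with x
  simp [mul_add, add_comm, mul_comm]

lemma BandLimited.mono {f : ℝ → E} {r r' : ℝ} (hf : BandLimited f r) (h : r ≤ r') :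
    BandLimited f r' :=
  fun ξ hξ => hf ξ (h.trans_lt hξ)

lemma BandLimited.fourier_smul [CompleteSpace E] {g : ℝ → ℂ} {f : ℝ → E} {r w : ℝ}
    (hf : BandLimited f r) (hfi : Integrable f) (hgi : Integrable g)
    (hg : ∀ s, w < |2 * Real.pi * s| → g s = 0) :
    BandLimited (fun x => 𝓕 g x • f x) (r + w) := by
  intro t ht
  rw [fourier_fourier_smul hgi hfi]
  refine integral_eq_zero_of_ae (.of_forall fun s => ?_)
  rcases lt_or_ge w |2 * Real.pi * s| with hs | hs
  · simp [hg s hs]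
  · have htri := abs_sub_abs_le_abs_sub (2 * Real.pi * t) (-(2 * Real.pi * s))
    rw [abs_neg, sub_neg_eq_add, ← mul_add] at htri
    simp [hf (t + s) (by linarith)]

lemma eventually_lt_abs_two_pi_mul {r ξ : ℝ} (hξ : r < |2 * Real.pi * ξ|) :
    ∀ᶠ s in 𝓝 ξ, r < |2 * Real.pi * s| :=
  (by fun_prop : ContinuousAt (fun s => |2 * Real.pi * s|) ξ).eventually_const_lt hξ

lemma bandLimited_fourier [CompleteSpace E] {g : ℝ → E} {r : ℝ} (hg : Integrable g)
    (hg' : Integrable (𝓕 g)) (hr : ∀ s, r < |2 * Real.pi * s| → g s = 0) :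
    BandLimited (𝓕 g) r := by
  intro ξ hξ
  have hlocal : g =ᶠ[𝓝 (-ξ)] fun _ => 0 :=
    (eventually_lt_abs_two_pi_mul (by simpa using hξ)).mono hr
  rw [← neg_neg ξ, ← Real.fourierInv_eq_fourier_neg,
    hg.fourierInv_fourier_eq hg' (continuousAt_const.congr hlocal.symm), hlocal.self_of_nhds]

lemma BandLimited.comp_sub_right {f : ℝ → E} {r : ℝ} (hf : BandLimited f r) (a : ℝ) :
    BandLimited (fun x => f (x - a)) r := by
  intro ξ hξ
  have hshift := congrFun (VectorFourier.fourierIntegral_comp_add_right Real.fourierChar volume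
    (innerₗ ℝ) f (-a)) ξ
  have hzero : VectorFourier.fourierIntegral Real.fourierChar volume (innerₗ ℝ) f ξ = 0 := hf ξ hξ
  rw [hzero, smul_zero] at hshift
  exact hshift

lemma BandLimited.const_smul {f : ℝ → E} {r : ℝ} (hf : BandLimited f r) (c : ℂ) :
    BandLimited (fun x => c • f x) r := by
  intro ξ hξ
  have h := hf ξ hξ
  rw [Real.fourier_real_eq] at h ⊢
  simp only [smul_comm _ c, integral_smul, h, smul_zero]

lemma BandLimited.id_smul {f : ℝ → E} {r : ℝ} (hf : BandLimited f r) (hfi : Integrable f)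
    (hfi' : Integrable fun x : ℝ => x • f x) : BandLimited (fun x : ℝ => x • f x) r := by
  have hderiv : BandLimited (fun x : ℝ => (-2 * Real.pi * Complex.I * x) • f x) r := by
    intro ξ hξ
    have hlocal : 𝓕 f =ᶠ[𝓝 ξ] fun _ => 0 :=
      (eventually_lt_abs_two_pi_mul hξ).mono hf
    exact (Real.hasDerivAt_fourier hfi hfi' ξ).unique
      ((hasDerivAt_const ξ (0 : E)).congr_of_eventuallyEq hlocal)
  convert hderiv.const_smul (-2 * Real.pi * Complex.I)⁻¹ using 2 with x
  rw [smul_smul, inv_mul_cancel_left₀ (by simp [Real.pi_ne_zero]), Complex.coe_smul]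

lemma BandLimited.tendsto {f : ℕ → ℝ → E} {g : ℝ → E} {bound : ℝ → ℝ} {r : ℝ}
    (hf : ∀ m, BandLimited (f m) r) (hfm : ∀ m, AEStronglyMeasurable (f m))
    (hbound : Integrable bound) (hle : ∀ m x, ‖f m x‖ ≤ bound x)
    (hlim : ∀ x, Tendsto (f · x) atTop (𝓝 (g x))) : BandLimited g r := by
  intro ξ hξ
  have hconv : Tendsto (fun m => 𝓕 (f m) ξ) atTop (𝓝 (𝓕 g ξ)) := by
    simp only [Real.fourier_real_eq]
    refine tendsto_integral_of_dominated_convergence bound (fun m => ?_) hbound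
      (fun m => .of_forall fun x => ?_) (.of_forall fun x => (hlim x).const_smul _)
    · exact (Continuous.aestronglyMeasurable (by fun_prop)).smul (hfm m)
    · simpa using hle m x
  simp only [hf _ ξ hξ] at hconv
  exact tendsto_nhds_unique hconv tendsto_const_nhds

lemma BandLimited.exists_schwartzMap [CompleteSpace E] {f : ℝ → E} {r : ℝ} (hf : BandLimited f r)
    (hc : Continuous f) (hint : ∀ k : ℕ, Integrable fun x : ℝ => x ^ k • f x) :
    ∃ ψ : 𝓢(ℝ, E), ⇑ψ = f := by
  have hsmooth : ContDiff ℝ ∞ (𝓕 f) :=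
    Real.contDiff_fourier fun k _ => by simpa [norm_smul] using (hint k).norm
  have hsupp : HasCompactSupport (𝓕 f) := by
    refine .intro (isCompact_closedBall 0 ((2 * Real.pi)⁻¹ * r)) fun ξ hξ => hf ξ ?_
    rwa [mem_closedBall_zero_iff, not_le, inv_mul_lt_iff₀ (by positivity), Real.norm_eq_abs,
      ← abs_of_pos Real.two_pi_pos, ← abs_mul] at hξ
  let F : 𝓢(ℝ, E) := hsupp.toSchwartzMap hsmooth
  refine ⟨𝓕⁻ F, ?_⟩
  rw [SchwartzMap.fourierInv_coe]
  exact hc.fourierInv_fourier_eq (by simpa using hint 0) F.integrable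

lemma BandLimited.exists_schwartzMap_real {f : ℝ → ℝ} {r : ℝ}
    (hf : BandLimited (fun x => (f x : ℂ)) r) (hc : Continuous f)
    (hint : ∀ k : ℕ, Integrable fun x : ℝ => x ^ k * f x) : ∃ ψ : 𝓢(ℝ, ℝ), ⇑ψ = f := by
  obtain ⟨ψ, hψ⟩ := hf.exists_schwartzMap (by fun_prop)
    fun k => by simpa using (hint k).ofReal (𝕜 := ℂ)
  exact ⟨ψ.postcompCLM Complex.reCLM, funext fun x => by simp [hψ]⟩

lemma integral_exp_mul_eq_fourier (f : ℝ → ℂ) (t : ℝ) :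
    ∫ x : ℝ, Complex.exp (-(↑(t * x)) * Complex.I) * f x = 𝓕 f ((2 * Real.pi)⁻¹ * t) := by
  rw [Real.fourier_real_eq_integral_exp_smul]
  congr! 4 with x
  rw [← Complex.ofReal_neg]
  congr 1
  field_simp

lemma BandLimited.integral_exp_mul_eq_zero {f : ℝ → ℂ} {r t : ℝ} (hf : BandLimited f r)
    (ht : r < |t|) : ∫ x : ℝ, Complex.exp (-(↑(t * x)) * Complex.I) * f x = 0 := by
  rw [integral_exp_mul_eq_fourier]
  exact hf _ (by rwa [mul_inv_cancel_left₀ Real.two_pi_pos.ne'])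

lemma norm_iteratedDeriv_integral_exp_mul_le {f : ℝ → ℂ} {j : ℕ}
    (hf : ∀ k ≤ j, Integrable fun x : ℝ => x ^ k • f x) (t : ℝ) :
    ‖iteratedDeriv j (fun t' : ℝ => ∫ x : ℝ, Complex.exp (-(↑(t' * x)) * Complex.I) * f x) t‖
      ≤ ∫ x : ℝ, |x| ^ j * ‖f x‖ := by
  have hf' : ∀ k : ℕ, (k : ℕ∞) ≤ j → Integrable fun x : ℝ => x ^ k • f x :=
    fun k hk => hf k (mod_cast hk)
  have hsmooth : ContDiff ℝ j (𝓕 f) := mod_cast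
    Real.contDiff_fourier (N := j) fun k hk => by simpa [norm_smul] using (hf' k hk).norm
  have hnorm : ∀ x : ℝ, ‖(-2 * Real.pi * Complex.I * (x : ℂ)) ^ j • f x‖
      = (2 * Real.pi) ^ j * (|x| ^ j * ‖f x‖) := fun x => by
    simp [mul_pow, abs_of_pos Real.pi_pos, mul_assoc]
  simp only [integral_exp_mul_eq_fourier]
  rw [iteratedDeriv_comp_const_smul hsmooth, Real.iteratedDeriv_fourier hf' le_rfl, norm_smul,
    norm_pow, norm_inv, inv_pow, Real.norm_of_nonneg Real.two_pi_pos.le,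
    inv_mul_le_iff₀ (by positivity), ← integral_const_mul]
  simp only [← hnorm]
  exact VectorFourier.norm_fourierIntegral_le_integral_norm _ _ _ _ _

end BandLimited

section Sinc

lemma abs_mul_abs_sinc_le_one (x : ℝ) : |x| * |Real.sinc x| ≤ 1 := by
  rcases eq_or_ne x 0 with rfl | hx
  · simp
  · rw [Real.sinc_of_ne_zero hx, abs_div, mul_div_cancel₀ _ (abs_ne_zero.2 hx)]
    exact Real.abs_sin_le_one x

lemma sinc_sq_le_one (x : ℝ) : Real.sinc x ^ 2 ≤ 1 :=
  sq_le_one_iff_abs_le_one _ |>.2 (Real.abs_sinc_le_one x)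

lemma sinc_sq_le_exp_neg_one {x : ℝ} (hx : Real.exp 1 ≤ |x|) :
    Real.sinc x ^ 2 ≤ Real.exp (-1) := by
  have h : |Real.sinc x| ≤ Real.exp (-1) := by
    rw [Real.exp_neg, ← one_div, le_div_iff₀' (Real.exp_pos 1)]
    exact (by gcongr : _ ≤ |x| * |Real.sinc x|).trans (abs_mul_abs_sinc_le_one x)
  rw [← sq_abs, sq]
  exact (mul_le_of_le_one_left (abs_nonneg _) (Real.abs_sinc_le_one x)).trans h

lemma one_sub_abs_le_sinc (x : ℝ) : 1 - |x| ≤ Real.sinc x := by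
  wlog hx : 0 < x generalizing x
  · rcases (not_lt.1 hx).eq_or_lt with rfl | hneg
    · simp
    · simpa using this (-x) (neg_pos.2 hneg)
  rw [abs_of_pos hx, Real.sinc_of_ne_zero hx.ne', le_div_iff₀ hx]
  rcases le_or_gt x 2 with hx2 | hx2
  · nlinarith [Real.sin_gt_sub_cube hx, pow_pos hx 2]
  · nlinarith [Real.neg_one_le_sin x]

lemma one_sub_sinc_sq_le (x : ℝ) : 1 - Real.sinc x ^ 2 ≤ 2 * |x| := by
  nlinarith [one_sub_abs_le_sinc x, Real.sinc_le_one x, abs_nonneg x]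

lemma one_add_abs_mul_abs_sinc_le {w : ℝ} (hw : 0 < w) (x : ℝ) :
    (1 + |x|) * |Real.sinc (w * x)| ≤ 1 + w⁻¹ := by
  have h := abs_mul_abs_sinc_le_one (w * x)
  rw [abs_mul, abs_of_pos hw, mul_assoc, ← le_div_iff₀' hw, one_div] at h
  linarith [Real.abs_sinc_le_one (w * x)]

lemma one_add_abs_mul_sinc_sq_le {w : ℝ} (hw : 0 < w) (x : ℝ) :
    (1 + |x|) * Real.sinc (w * x) ^ 2 ≤ 1 + w⁻¹ := by
  rw [← sq_abs, sq, ← mul_assoc]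
  exact (mul_le_of_le_one_right (by positivity) (Real.abs_sinc_le_one _)).trans
    (one_add_abs_mul_abs_sinc_le hw x)

lemma integrable_sinc_sq {w : ℝ} (hw : 0 < w) : Integrable fun x => Real.sinc (w * x) ^ 2 := by
  refine (integrable_inv_one_add_sq.const_mul ((1 + w⁻¹) ^ 2)).mono'
    (Real.continuous_sinc.comp (by fun_prop) |>.pow 2).aestronglyMeasurable (.of_forall fun x => ?_)
  have h : ((1 + |x|) * |Real.sinc (w * x)|) ^ 2 ≤ (1 + w⁻¹) ^ 2 := by
    gcongr
    exact one_add_abs_mul_abs_sinc_le hw x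
  rw [Real.norm_of_nonneg (sq_nonneg _), ← div_eq_mul_inv, le_div_iff₀ (by positivity), ← sq_abs]
  rw [mul_pow] at h
  nlinarith [sq_nonneg |Real.sinc (w * x)|, abs_nonneg x, sq_abs x,
    mul_nonneg (sq_nonneg |Real.sinc (w * x)|) (abs_nonneg x)]

/-- The indicator function of the band `[-w, w]` of angular frequencies, normalized so that its
Fourier transform takes the value `1` at `0`. -/
noncomputable def bandIndicator (w : ℝ) : ℝ → ℂ :=
  (Set.Icc (-(w / (2 * Real.pi))) (w / (2 * Real.pi))).indicator fun _ => (Real.pi / w : ℂ)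

lemma bandIndicator_eq_zero {w s : ℝ} (hs : w < |2 * Real.pi * s|) : bandIndicator w s = 0 := by
  refine Set.indicator_of_notMem (fun hmem => hs.not_ge ?_) _
  rw [abs_mul, abs_of_pos Real.two_pi_pos, ← le_div_iff₀' Real.two_pi_pos]
  exact abs_le.2 hmem

lemma integrable_bandIndicator (w : ℝ) : Integrable (bandIndicator w) :=
  (integrable_indicator_iff measurableSet_Icc).2 (by simp)

lemma fourier_bandIndicator {w : ℝ} (hw : 0 < w) (x : ℝ) :
    𝓕 (bandIndicator w) x = Real.sinc (w * x) := by
  have hint : 𝓕 (bandIndicator w) x = (∫ s in -(w / (2 * Real.pi))..w / (2 * Real.pi),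
      Complex.exp (↑(-(2 * Real.pi * x) * s) * Complex.I)) * (Real.pi / w) := by
    rw [Real.fourier_real_eq_integral_exp_smul, bandIndicator,
      intervalIntegral.integral_of_le (neg_le_self (by positivity)), ← integral_Icc_eq_integral_Ioc,
      ← integral_mul_const, ← integral_indicator measurableSet_Icc]
    refine integral_congr_ae (.of_forall fun s => ?_)
    by_cases hs : s ∈ Set.Icc (-(w / (2 * Real.pi))) (w / (2 * Real.pi))
    · simp only [Set.indicator_of_mem hs, smul_eq_mul]
      ring_nf
    · simp only [Set.indicator_of_notMem hs, smul_zero]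
  have hw' : (w : ℂ) ≠ 0 := by exact_mod_cast hw.ne'
  rcases eq_or_ne x 0 with rfl | hx
  · simp only [hint, mul_zero, neg_zero, zero_mul, Complex.ofReal_zero, Complex.exp_zero,
      intervalIntegral.integral_const, Complex.real_smul, Real.sinc_zero]
    push_cast
    field_simp
    norm_num
  · have hsub := intervalIntegral.smul_integral_comp_mul_left
      (f := fun t : ℝ => Complex.exp (t * Complex.I)) (a := -(w / (2 * Real.pi)))
      (b := w / (2 * Real.pi)) (-(2 * Real.pi * x))
    have hend : -(2 * Real.pi * x) * (w / (2 * Real.pi)) = -(w * x) := by field_simp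
    rw [mul_neg, hend, integral_exp_mul_I_eq_sinc, Complex.real_smul, Real.sinc_neg] at hsub
    have hx' : (x : ℂ) ≠ 0 := by exact_mod_cast hx
    rw [hint]
    push_cast at hsub ⊢
    rw [mul_div_assoc', div_eq_iff hw']
    refine mul_left_cancel₀ (neg_ne_zero.2 (mul_ne_zero two_ne_zero hx')) ?_
    linear_combination hsub

lemma bandLimited_sinc_sq {w : ℝ} (hw : 0 < w) :
    BandLimited (fun x => ((Real.sinc (w * x) ^ 2 : ℝ) : ℂ)) (2 * w) := by
  let g := bandIndicator w ⋆[ContinuousLinearMap.mul ℂ ℂ] bandIndicator w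
  have hgi := integrable_bandIndicator w
  have hg : 𝓕 g = fun x => ((Real.sinc (w * x) ^ 2 : ℝ) : ℂ) := by
    ext x
    rw [Real.fourier_mul_convolution_eq hgi hgi, fourier_bandIndicator hw, ← sq,
      Complex.ofReal_pow]
  rw [← hg]
  refine bandLimited_fourier (hgi.integrable_convolution _ hgi) ?_ fun s hs => ?_
  · rw [hg]
    exact (integrable_sinc_sq hw).ofReal
  · refine integral_eq_zero_of_ae (.of_forall fun t => ?_)
    rcases lt_or_ge w |2 * Real.pi * t| with ht | ht
    · simp [bandIndicator_eq_zero ht]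
    · have htri := abs_sub_abs_le_abs_sub (2 * Real.pi * s) (2 * Real.pi * t)
      rw [← mul_sub] at htri
      simp [bandIndicator_eq_zero (w := w) (s := s - t) (by linarith)]

end Sinc

section SpectralWindow

/-- An even continuous multiplier `0 ≤ G ≤ 1` whose spectrum lies, informally, in `[-s, s]`.
Since `G` need not be integrable, this is expressed by its action: multiplication by `G` widens the
band of every integrable band-limited function by at most `s`. -/
structure SpectralWindow (G : ℝ → ℝ) (s : ℝ) : Prop where
  continuous : Continuous G
  nonneg : ∀ x, 0 ≤ G x
  le_one : ∀ x, G x ≤ 1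
  even : ∀ x, G (-x) = G x
  bandLimited_mul : ∀ {f : ℝ → ℂ} {r : ℝ}, Integrable f → BandLimited f r →
    BandLimited (fun x => (G x : ℂ) * f x) (r + s)

namespace SpectralWindow

variable {G H : ℝ → ℝ} {s t : ℝ}

lemma sinc_sq {w : ℝ} (hw : 0 < w) : SpectralWindow (fun x => Real.sinc (w * x) ^ 2) (2 * w) where
  continuous := (Real.continuous_sinc.comp (by fun_prop)).pow 2
  nonneg _ := sq_nonneg _
  le_one _ := sinc_sq_le_one _
  even x := by simp
  bandLimited_mul {f r} hfi hf := by
    have hfi' : Integrable fun x => (Real.sinc (w * x) : ℂ) • f x :=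
      hfi.bdd_mul (Complex.continuous_ofReal.comp
        (Real.continuous_sinc.comp (by fun_prop))).aestronglyMeasurable
        (.of_forall fun x => (Complex.norm_real _).trans_le (Real.abs_sinc_le_one (w * x)))
    have honce : ∀ {g : ℝ → ℂ} {q : ℝ}, Integrable g → BandLimited g q →
        BandLimited (fun x => (Real.sinc (w * x) : ℂ) • g x) (q + w) := fun hgi hg => by
      simpa only [fourier_bandIndicator hw] using hg.fourier_smul hgi (integrable_bandIndicator w)
        fun s => bandIndicator_eq_zero
    have htwice := honce hfi' (honce hfi hf)
    rw [add_assoc, ← two_mul] at htwice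
    simpa only [sq, Complex.ofReal_mul, mul_assoc, smul_eq_mul] using htwice

lemma integrable_mul (hG : SpectralWindow G s) {f : ℝ → ℂ} (hf : Integrable f) :
    Integrable fun x => (G x : ℂ) * f x :=
  hf.bdd_mul (Complex.continuous_ofReal.comp hG.continuous).aestronglyMeasurable
    (.of_forall fun x => by simpa [abs_of_nonneg (hG.nonneg x)] using hG.le_one x)

lemma one : SpectralWindow (fun _ => 1) 0 where
  continuous := continuous_const
  nonneg _ := zero_le_one
  le_one _ := le_rfl
  even _ := rfl
  bandLimited_mul _ hf := by simpa using hf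

lemma mul (hG : SpectralWindow G s) (hH : SpectralWindow H t) :
    SpectralWindow (fun x => G x * H x) (s + t) where
  continuous := hG.continuous.mul hH.continuous
  nonneg x := mul_nonneg (hG.nonneg x) (hH.nonneg x)
  le_one x := mul_le_one₀ (hG.le_one x) (hH.nonneg x) (hH.le_one x)
  even x := by rw [hG.even, hH.even]
  bandLimited_mul hfi hf := by
    have h := hG.bandLimited_mul (hH.integrable_mul hfi) (hH.bandLimited_mul hfi hf)
    rw [add_assoc, add_comm t s] at h
    simpa only [Complex.ofReal_mul, mul_assoc] using h

lemma prod {ι : Type*} {G : ι → ℝ → ℝ} {s : ι → ℝ} (I : Finset ι)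
    (hG : ∀ i ∈ I, SpectralWindow (G i) (s i)) :
    SpectralWindow (fun x => ∏ i ∈ I, G i x) (∑ i ∈ I, s i) := by
  classical
  induction I using Finset.induction_on with
  | empty => simpa using one
  | insert i I hi ih =>
    simp only [Finset.prod_insert hi, Finset.sum_insert hi]
    exact (hG i (Finset.mem_insert_self i I)).mul
      (ih fun k hk => hG k (Finset.mem_insert_of_mem hk))

section InfiniteProduct

variable {G : ℕ → ℝ → ℝ} {s c : ℕ → ℝ} (hG : ∀ i, SpectralWindow (G i) (s i))
  (hc : Summable c) (hGc : ∀ i x, 1 - G i x ≤ c i * |x|)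

include hG hc hGc

lemma tendstoUniformlyOn_prod (R : ℝ) :
    TendstoUniformlyOn (fun m x => ∏ i ∈ Finset.range m, G i x) (fun x => ∏' i, G i x) atTop
      (Metric.closedBall 0 R) := by
  have hbound : ∀ i, ∀ x ∈ Metric.closedBall (0 : ℝ) R, ‖G i x - 1‖ ≤ |c i| * R := by
    intro i x hx
    rw [mem_closedBall_zero_iff, Real.norm_eq_abs] at hx
    rw [Real.norm_eq_abs, abs_sub_comm, abs_of_nonneg (sub_nonneg.2 ((hG i).le_one x))]
    calc 1 - G i x ≤ c i * |x| := hGc i x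
      _ ≤ |c i| * R := by gcongr; exact le_abs_self _
  have hprod := Summable.hasProdUniformlyOn_nat_one_add (isCompact_closedBall (0 : ℝ) R)
    (hc.abs.mul_right R) (.of_forall hbound)
    fun i => ((hG i).continuous.sub continuous_const).continuousOn
  simpa using hprod.tendstoUniformlyOn_finsetRange

lemma tendsto_prod (x : ℝ) :
    Tendsto (fun m => ∏ i ∈ Finset.range m, G i x) atTop (𝓝 (∏' i, G i x)) :=
  (tendstoUniformlyOn_prod hG hc hGc |x|).tendsto_at (by simp)

lemma continuous_tprod : Continuous fun x => ∏' i, G i x := by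
  refine continuous_iff_continuousAt.2 fun x => ?_
  refine (tendstoUniformlyOn_prod hG hc hGc (|x| + 1)).continuousOn (.of_forall fun m =>
    (prod _ fun i _ => hG i).continuous.continuousOn) |>.continuousAt ?_
  exact Metric.closedBall_mem_nhds_of_mem (by simp)

lemma tprod_le_prod (m : ℕ) (x : ℝ) : ∏' i, G i x ≤ ∏ i ∈ Finset.range m, G i x := by
  refine Antitone.le_of_tendsto (antitone_nat_of_succ_le fun k => ?_) (tendsto_prod hG hc hGc x) m
  rw [Finset.prod_range_succ]
  exact mul_le_of_le_one_right ((prod _ fun i _ => hG i).nonneg x) ((hG k).le_one x)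

lemma tprod (hs : Summable s) (hs0 : ∀ i, 0 ≤ s i) :
    SpectralWindow (fun x => ∏' i, G i x) (∑' i, s i) where
  continuous := continuous_tprod hG hc hGc
  nonneg x := ge_of_tendsto' (tendsto_prod hG hc hGc x) fun m => (prod _ fun i _ => hG i).nonneg x
  le_one x := by simpa using tprod_le_prod hG hc hGc 0 x
  even x := by simp only [(hG _).even]
  bandLimited_mul {f r} hfi hf := by
    refine BandLimited.tendsto (f := fun m x => ((∏ i ∈ Finset.range m, G i x : ℝ) : ℂ) * f x)
      (fun m => ?_) (fun m => ?_) hfi.norm (fun m x => ?_) fun x => ?_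
    · exact ((prod _ fun i _ => hG i).bandLimited_mul hfi hf).mono
        (by gcongr; exact hs.sum_le_tsum _ fun i _ => hs0 i)
    · exact ((prod _ fun i _ => hG i).integrable_mul hfi).aestronglyMeasurable
    · have hw := prod (Finset.range m) fun i _ => hG i
      rw [norm_mul, Complex.norm_real, Real.norm_of_nonneg (hw.nonneg x)]
      exact mul_le_of_le_one_left (norm_nonneg _) (hw.le_one x)
    · exact ((Complex.continuous_ofReal.tendsto _).comp (tendsto_prod hG hc hGc x)).mul_const _

end InfiniteProduct

end SpectralWindow

end SpectralWindow

section SincSqProd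

/-- The infinite product `∏ᵢ sinc² (aᵢ x)`, a multiplier whose total bandwidth is `2 ∑ᵢ aᵢ`. -/
noncomputable def sincSqProd (a : ℕ → ℝ) (x : ℝ) : ℝ :=
  ∏' i, Real.sinc (a i * x) ^ 2

lemma sincSqProd_zero (a : ℕ → ℝ) : sincSqProd a 0 = 1 := by
  simp [sincSqProd]

section Summable

variable {a : ℕ → ℝ} (ha : ∀ i, 0 < a i) (hs : Summable a)

include ha in
lemma one_sub_sinc_sq_mul_le (i : ℕ) (x : ℝ) :
    1 - Real.sinc (a i * x) ^ 2 ≤ 2 * a i * |x| := by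
  simpa [abs_mul, abs_of_pos (ha i), mul_assoc] using one_sub_sinc_sq_le (a i * x)

include ha hs

lemma spectralWindow_sincSqProd : SpectralWindow (sincSqProd a) (2 * ∑' i, a i) := by
  rw [← tsum_mul_left]
  exact .tprod (fun i => .sinc_sq (ha i)) (hs.mul_left 2) (one_sub_sinc_sq_mul_le ha)
    (hs.mul_left 2) fun i => by linarith [ha i]

lemma sincSqProd_le_prod (m : ℕ) (x : ℝ) :
    sincSqProd a x ≤ ∏ i ∈ Finset.range m, Real.sinc (a i * x) ^ 2 :=
  SpectralWindow.tprod_le_prod (fun i => .sinc_sq (ha i)) (hs.mul_left 2)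
    (one_sub_sinc_sq_mul_le ha) m x

lemma one_add_abs_pow_mul_sincSqProd_le (k : ℕ) (x : ℝ) :
    (1 + |x|) ^ k * sincSqProd a x ≤ ∏ i ∈ Finset.range k, (1 + (a i)⁻¹) :=
  calc (1 + |x|) ^ k * sincSqProd a x
      ≤ (1 + |x|) ^ k * ∏ i ∈ Finset.range k, Real.sinc (a i * x) ^ 2 := by
        gcongr
        exact sincSqProd_le_prod ha hs k x
    _ = ∏ i ∈ Finset.range k, (1 + |x|) * Real.sinc (a i * x) ^ 2 := by
        rw [Finset.prod_mul_distrib, Finset.prod_const, Finset.card_range]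
    _ ≤ ∏ i ∈ Finset.range k, (1 + (a i)⁻¹) :=
        Finset.prod_le_prod (fun _ _ => by positivity)
          fun i _ => one_add_abs_mul_sinc_sq_le (ha i) x

lemma sincSqProd_le_exp_neg {m : ℕ} {x : ℝ} (hx : ∀ i < m, Real.exp 1 ≤ |a i * x|) :
    sincSqProd a x ≤ Real.exp (-m) :=
  calc sincSqProd a x ≤ ∏ i ∈ Finset.range m, Real.sinc (a i * x) ^ 2 :=
        sincSqProd_le_prod ha hs m x
    _ ≤ ∏ _i ∈ Finset.range m, Real.exp (-1) :=
        Finset.prod_le_prod (fun _ _ => sq_nonneg _)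
          fun i hi => sinc_sq_le_exp_neg_one (hx i (Finset.mem_range.1 hi))
    _ = Real.exp (-m) := by
        rw [Finset.prod_const, Finset.card_range, ← Real.exp_nat_mul, mul_neg_one]

end Summable

lemma summable_inv_add_one_rpow {p : ℝ} (hp : 1 < p) :
    Summable fun i : ℕ => (((i : ℝ) + 1) ^ p)⁻¹ := by
  simpa using (summable_nat_add_iff 1).2 (Real.summable_nat_rpow_inv.2 hp)

lemma sincSqProd_inv_rpow_le {δ c : ℝ} (hδ0 : 0 < δ) (hδ1 : δ < 1) (hc : 0 < c) (x : ℝ) :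
    sincSqProd (fun i => c * (((i : ℝ) + 1) ^ δ⁻¹)⁻¹) x
      ≤ Real.exp 1 * Real.exp (-(c / Real.exp 1 * |x|) ^ δ) := by
  set z : ℝ := c / Real.exp 1 * |x| with hz
  have hz0 : 0 ≤ z := by positivity
  have hlarge : ∀ i < ⌊z ^ δ⌋₊, Real.exp 1 ≤ |c * (((i : ℝ) + 1) ^ δ⁻¹)⁻¹ * x| := by
    intro i hi
    have hi' : (i : ℝ) + 1 ≤ z ^ δ := mod_cast (Nat.le_floor_iff (by positivity)).1 hi
    have hiz : ((i : ℝ) + 1) ^ δ⁻¹ ≤ z :=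
      (Real.rpow_inv_le_iff_of_pos (by positivity) hz0 hδ0).2 hi'
    rw [abs_mul, abs_of_pos (by positivity), mul_right_comm, ← div_eq_mul_inv,
      le_div_iff₀ (by positivity)]
    calc Real.exp 1 * ((i : ℝ) + 1) ^ δ⁻¹ ≤ Real.exp 1 * z := by gcongr
      _ = c * |x| := by rw [hz]; field_simp
  refine (sincSqProd_le_exp_neg (fun i => by positivity)
    ((summable_inv_add_one_rpow ((one_lt_inv₀ hδ0).2 hδ1)).mul_left c) hlarge).trans ?_
  rw [← Real.exp_add, Real.exp_le_exp]
  linarith [Nat.lt_floor_add_one (z ^ δ)]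

lemma exists_rpow_le_add_mul_rpow {γ δ d : ℝ} (hγ : 0 ≤ γ) (hγδ : γ < δ) (hd : 0 < d) :
    ∃ M : ℝ, ∀ v : ℝ, 0 ≤ v → v ^ γ ≤ M + d * v ^ δ := by
  have hlarge : ∀ᶠ v : ℝ in atTop, d⁻¹ ≤ v ^ (δ - γ) :=
    (tendsto_rpow_atTop (sub_pos.2 hγδ)).eventually_ge_atTop d⁻¹
  obtain ⟨X, hX⟩ := eventually_atTop.1 (hlarge.and (eventually_gt_atTop 0))
  have hX0 : 0 < X := (hX X le_rfl).2
  refine ⟨X ^ γ, fun v hv => ?_⟩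
  rcases le_total v X with hvX | hXv
  · linarith [Real.rpow_le_rpow hv hvX hγ, mul_nonneg hd.le (Real.rpow_nonneg hv δ)]
  · obtain ⟨hpow, hv0⟩ := hX v hXv
    calc v ^ γ ≤ v ^ γ * (d * v ^ (δ - γ)) :=
          le_mul_of_one_le_right (by positivity) ((inv_le_iff_one_le_mul₀' hd).1 hpow)
      _ = d * v ^ δ := by
          rw [mul_left_comm, ← Real.rpow_add hv0, add_sub_cancel]
      _ ≤ X ^ γ + d * v ^ δ := le_add_of_nonneg_left (by positivity)

lemma exists_sincSqProd_le_exp_neg_rpow {γ ε : ℝ} (hγ0 : 0 < γ) (hγ1 : γ < 1) (hε : 0 < ε) :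
    ∃ a : ℕ → ℝ, (∀ i, 0 < a i) ∧ Summable a ∧ ∑' i, a i = ε ∧
      ∃ D, ∀ x, sincSqProd a x ≤ D * Real.exp (-|x| ^ γ) := by
  obtain ⟨δ, hγδ, hδ1⟩ := exists_between hγ1
  have hδ0 : 0 < δ := hγ0.trans hγδ
  have hsum := summable_inv_add_one_rpow ((one_lt_inv₀ hδ0).2 hδ1)
  have hS : 0 < ∑' i : ℕ, (((i : ℝ) + 1) ^ δ⁻¹)⁻¹ :=
    hsum.tsum_pos (fun i => by positivity) 0 (by positivity)
  set c := ε / ∑' i : ℕ, (((i : ℝ) + 1) ^ δ⁻¹)⁻¹ with hc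
  have hc0 : 0 < c := div_pos hε hS
  obtain ⟨M, hM⟩ := exists_rpow_le_add_mul_rpow hγ0.le hγδ
    (Real.rpow_pos_of_pos (div_pos hc0 (Real.exp_pos 1)) δ)
  refine ⟨fun i => c * (((i : ℝ) + 1) ^ δ⁻¹)⁻¹, fun i => by positivity, hsum.mul_left c, ?_,
    Real.exp (1 + M), fun x => (sincSqProd_inv_rpow_le hδ0 hδ1 hc0 x).trans ?_⟩
  · rw [tsum_mul_left, hc, div_mul_cancel₀ _ hS.ne']
  · rw [← Real.exp_add, ← Real.exp_add, Real.exp_le_exp,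
      Real.mul_rpow (by positivity) (abs_nonneg x)]
    linarith [hM |x| (abs_nonneg x)]

end SincSqProd

section EvenProfile

/-- A nonnegative even continuous function with finite moments of all orders and Fourier transform
supported in `[-r, r]`: the profiles from which signed kernels are built. -/
structure EvenProfile (Q : ℝ → ℝ) (r : ℝ) : Prop where
  continuous : Continuous Q
  nonneg : ∀ x, 0 ≤ Q x
  even : ∀ x, Q (-x) = Q x
  integrable_pow_mul : ∀ k : ℕ, Integrable fun x => x ^ k * Q x
  bandLimited : BandLimited (fun x => (Q x : ℂ)) r

/-- The kernel `y ↦ y Q(y - 1) / ∫ Q`, which has the sign of `y` when `Q ≥ 0`. -/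
noncomputable def signedKernel (Q : ℝ → ℝ) (y : ℝ) : ℝ :=
  (∫ u, Q u)⁻¹ * (y * Q (y - 1))

namespace EvenProfile

variable {Q : ℝ → ℝ} {r : ℝ}

lemma integrable (hQ : EvenProfile Q r) : Integrable Q := by
  simpa using hQ.integrable_pow_mul 0

lemma integrable_id_mul (hQ : EvenProfile Q r) : Integrable fun x => x * Q x := by
  simpa using hQ.integrable_pow_mul 1

lemma spectralWindow_mul {G : ℝ → ℝ} {s : ℝ} (hQ : EvenProfile Q r) (hG : SpectralWindow G s) :
    EvenProfile (fun x => G x * Q x) (r + s) where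
  continuous := hG.continuous.mul hQ.continuous
  nonneg x := mul_nonneg (hG.nonneg x) (hQ.nonneg x)
  even x := by rw [hQ.even, hG.even]
  integrable_pow_mul k := by
    simp only [mul_left_comm _ (G _)]
    exact (hQ.integrable_pow_mul k).bdd_mul hG.continuous.aestronglyMeasurable
      (.of_forall fun x => (Real.norm_of_nonneg (hG.nonneg x)).trans_le (hG.le_one x))
  bandLimited := by
    simp only [Complex.ofReal_mul]
    exact hG.bandLimited_mul hQ.integrable.ofReal hQ.bandLimited

lemma integrable_one_add_abs_pow_mul (hQ : EvenProfile Q r) (k : ℕ) :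
    Integrable fun x => (1 + |x|) ^ k * Q x := by
  have hterm : ∀ m : ℕ, Integrable fun x => |x| ^ m * Q x := fun m => by
    simpa only [norm_mul, norm_pow, Real.norm_eq_abs, abs_of_nonneg (hQ.nonneg _)] using
      (hQ.integrable_pow_mul m).norm
  simp only [add_comm (1 : ℝ), add_pow, one_pow, mul_one, Finset.sum_mul, mul_right_comm _ _ (Q _)]
  exact integrable_finsetSum _ fun m _ => (hterm m).mul_const _

lemma integrable_add_one_pow_mul (hQ : EvenProfile Q r) (k : ℕ) :
    Integrable fun x => (x + 1) ^ k * Q x := by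
  have hcont := hQ.continuous
  refine (hQ.integrable_one_add_abs_pow_mul k).mono' (by fun_prop) (.of_forall fun x => ?_)
  rw [norm_mul, norm_pow, Real.norm_of_nonneg (hQ.nonneg x), Real.norm_eq_abs, add_comm]
  have := hQ.nonneg x
  gcongr
  simpa using abs_add_le 1 x

lemma zero_le_integral (hQ : EvenProfile Q r) : 0 ≤ ∫ u, Q u :=
  integral_nonneg hQ.nonneg

lemma integral_id_mul_eq_zero (hQ : EvenProfile Q r) : ∫ u, u * Q u = 0 := by
  have hodd := integral_neg_eq_self (fun u => u * Q u) volume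
  simp only [hQ.even, neg_mul, integral_neg] at hodd
  linarith

lemma integral_signedKernel (hQ : EvenProfile Q r) (hpos : 0 < ∫ u, Q u) :
    ∫ y, signedKernel Q y = 1 := by
  have hshift : ∫ y, y * Q (y - 1) = ∫ u, Q u := by
    rw [← integral_add_right_eq_self _ (1 : ℝ)]
    simp only [add_sub_cancel_right, add_mul, one_mul]
    rw [integral_add hQ.integrable_id_mul hQ.integrable, hQ.integral_id_mul_eq_zero, zero_add]
  simp only [signedKernel, integral_const_mul, hshift, inv_mul_cancel₀ hpos.ne']

lemma mul_signedKernel_nonneg (hQ : EvenProfile Q r) (y : ℝ) : 0 ≤ y * signedKernel Q y := by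
  rw [signedKernel, mul_left_comm, ← mul_assoc y]
  exact mul_nonneg (inv_nonneg.2 hQ.zero_le_integral)
    (mul_nonneg (mul_self_nonneg y) (hQ.nonneg _))

lemma abs_signedKernel (hQ : EvenProfile Q r) (y : ℝ) :
    |signedKernel Q y| = (∫ u, Q u)⁻¹ * (|y| * Q (y - 1)) := by
  rw [signedKernel, abs_mul, abs_mul, abs_of_nonneg (hQ.nonneg _),
    abs_of_nonneg (inv_nonneg.2 hQ.zero_le_integral)]

lemma integrable_pow_mul_signedKernel (hQ : EvenProfile Q r) (k : ℕ) :
    Integrable fun y => y ^ k * signedKernel Q y := by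
  have h := ((hQ.integrable_add_one_pow_mul (k + 1)).comp_sub_right 1).const_mul (∫ u, Q u)⁻¹
  simpa only [signedKernel, sub_add_cancel, pow_succ, mul_assoc, mul_left_comm _ (∫ u, Q u)⁻¹]
    using h

lemma bandLimited_signedKernel (hQ : EvenProfile Q r) :
    BandLimited (fun y => (signedKernel Q y : ℂ)) r := by
  have hid : Integrable fun y => y * Q (y - 1) := by
    simpa using (hQ.integrable_add_one_pow_mul 1).comp_sub_right 1
  have h := ((hQ.bandLimited.comp_sub_right 1).id_smul (hQ.integrable.comp_sub_right 1).ofReal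
    (by simpa using hid.ofReal (𝕜 := ℂ))).const_smul (((∫ u, Q u)⁻¹ : ℝ) : ℂ)
  simpa only [signedKernel, Complex.ofReal_mul, Complex.real_smul, smul_eq_mul] using h

lemma exists_schwartzMap_signedKernel (hQ : EvenProfile Q r) :
    ∃ ψ : 𝓢(ℝ, ℝ), ⇑ψ = signedKernel Q := by
  have hcont := hQ.continuous
  exact hQ.bandLimited_signedKernel.exists_schwartzMap_real
    (by unfold signedKernel; fun_prop) hQ.integrable_pow_mul_signedKernel

lemma norm_iteratedDeriv_signedKernel_le (hQ : EvenProfile Q r) (j : ℕ) (t : ℝ) :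
    ‖iteratedDeriv j (fun t' : ℝ =>
        ∫ x : ℝ, Complex.exp (-(↑(t' * x)) * Complex.I) * (signedKernel Q x : ℂ)) t‖
      ≤ (∫ u, Q u)⁻¹ * ∫ u, (1 + |u|) ^ (j + 1) * Q u := by
  refine (norm_iteratedDeriv_integral_exp_mul_le (fun k _ => by
    simpa using (hQ.integrable_pow_mul_signedKernel k).ofReal (𝕜 := ℂ)) t).trans ?_
  have hmoment : ∀ x, |x| ^ j * ‖(signedKernel Q x : ℂ)‖
      = (∫ u, Q u)⁻¹ * (|x| ^ (j + 1) * Q (x - 1)) := fun x => by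
    rw [Complex.norm_real, Real.norm_eq_abs, hQ.abs_signedKernel]
    ring
  simp only [hmoment, integral_const_mul]
  rw [← integral_add_right_eq_self (fun x => |x| ^ (j + 1) * Q (x - 1)) (1 : ℝ)]
  simp only [add_sub_cancel_right]
  refine mul_le_mul_of_nonneg_left ?_ (inv_nonneg.2 hQ.zero_le_integral)
  refine integral_mono_of_nonneg (.of_forall fun u => mul_nonneg (by positivity) (hQ.nonneg u))
    (hQ.integrable_one_add_abs_pow_mul (j + 1)) (.of_forall fun u => ?_)
  refine mul_le_mul_of_nonneg_right (pow_le_pow_left₀ (abs_nonneg _) ?_ _) (hQ.nonneg u)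
  simpa [add_comm] using abs_add_le u 1

end EvenProfile

lemma exp_neg_abs_sub_one_rpow_le {γ : ℝ} (hγ0 : 0 ≤ γ) (hγ1 : γ ≤ 1) (y : ℝ) :
    Real.exp (-|y - 1| ^ γ) ≤ Real.exp 1 * Real.exp (-|y| ^ γ) := by
  have h : |y| ^ γ ≤ |y - 1| ^ γ + 1 :=
    calc |y| ^ γ ≤ (|y - 1| + 1) ^ γ := by
          gcongr
          simpa using abs_add_le (y - 1) 1
      _ ≤ |y - 1| ^ γ + 1 ^ γ := Real.rpow_add_le_add_rpow (abs_nonneg _) zero_le_one hγ0 hγ1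
      _ = |y - 1| ^ γ + 1 := by rw [Real.one_rpow]
  rw [← Real.exp_add, Real.exp_le_exp]
  linarith

lemma EvenProfile.abs_signedKernel_le {Q : ℝ → ℝ} {r γ D : ℝ} (hQ : EvenProfile Q r)
    (hγ0 : 0 ≤ γ) (hγ1 : γ ≤ 1) (hD : ∀ u, (1 + |u|) * Q u ≤ D * Real.exp (-|u| ^ γ)) (y : ℝ) :
    |signedKernel Q y| ≤ (∫ u, Q u)⁻¹ * (D * Real.exp 1) * Real.exp (-|y| ^ γ) := by
  have hD0 : 0 ≤ D := by
    have h := (mul_nonneg (by positivity : (0 : ℝ) ≤ 1 + |0|) (hQ.nonneg 0)).trans (hD 0)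
    exact nonneg_of_mul_nonneg_left h (Real.exp_pos _)
  rw [hQ.abs_signedKernel, mul_assoc]
  refine mul_le_mul_of_nonneg_left ?_ (inv_nonneg.2 hQ.zero_le_integral)
  calc |y| * Q (y - 1) ≤ (1 + |y - 1|) * Q (y - 1) := by
        refine mul_le_mul_of_nonneg_right ?_ (hQ.nonneg _)
        simpa using abs_add_le 1 (y - 1)
    _ ≤ D * Real.exp (-|y - 1| ^ γ) := hD _
    _ ≤ D * (Real.exp 1 * Real.exp (-|y| ^ γ)) := by
        gcongr
        exact exp_neg_abs_sub_one_rpow_le hγ0 hγ1 y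
    _ = D * Real.exp 1 * Real.exp (-|y| ^ γ) := by rw [mul_assoc]

lemma evenProfile_sincSqProd_mul_sinc_sq {w : ℝ} {a : ℕ → ℝ} (hw : 0 < w) (ha : ∀ i, 0 < a i)
    (hs : Summable a) :
    EvenProfile (fun x => sincSqProd a x * Real.sinc (w * x) ^ 2) (2 * w + 2 * ∑' i, a i) where
  continuous := (spectralWindow_sincSqProd ha hs).continuous.mul
    (SpectralWindow.sinc_sq hw).continuous
  nonneg x := mul_nonneg ((spectralWindow_sincSqProd ha hs).nonneg x) (sq_nonneg _)
  even x := by rw [(spectralWindow_sincSqProd ha hs).even, (SpectralWindow.sinc_sq hw).even]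
  integrable_pow_mul k := by
    have hG := spectralWindow_sincSqProd ha hs
    have hcont := hG.continuous
    simp only [← mul_assoc]
    refine (integrable_sinc_sq hw).bdd_mul (c := ∏ i ∈ Finset.range k, (1 + (a i)⁻¹))
      (by fun_prop) (.of_forall fun x => ?_)
    refine le_trans ?_ (one_add_abs_pow_mul_sincSqProd_le ha hs k x)
    rw [norm_mul, norm_pow, Real.norm_of_nonneg (hG.nonneg x), Real.norm_eq_abs]
    refine mul_le_mul_of_nonneg_right (pow_le_pow_left₀ (abs_nonneg x) ?_ k) (hG.nonneg x)
    linarith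
  bandLimited := by
    simp only [Complex.ofReal_mul]
    exact (spectralWindow_sincSqProd ha hs).bandLimited_mul (integrable_sinc_sq hw).ofReal
      (bandLimited_sinc_sq hw)

lemma exists_evenProfile_le_exp_neg_rpow {γ r : ℝ} (hγ0 : 0 < γ) (hγ1 : γ < 1) (hr : 0 < r) :
    ∃ (P : ℝ → ℝ) (D : ℝ), EvenProfile P r ∧ P 0 = 1 ∧
      ∀ x, (1 + |x|) * P x ≤ D * Real.exp (-|x| ^ γ) := by
  have hw : 0 < r / 4 := by positivity
  obtain ⟨a, ha, hs, hsum, D, hD⟩ := exists_sincSqProd_le_exp_neg_rpow hγ0 hγ1 hw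
  refine ⟨fun x => sincSqProd a x * Real.sinc (r / 4 * x) ^ 2, (1 + (r / 4)⁻¹) * D, ?_, ?_,
    fun x => ?_⟩
  · convert evenProfile_sincSqProd_mul_sinc_sq hw ha hs using 1
    rw [hsum]
    ring
  · simp [sincSqProd_zero]
  · beta_reduce
    rw [mul_comm (sincSqProd a x), ← mul_assoc, mul_assoc _ D]
    exact mul_le_mul (one_add_abs_mul_sinc_sq_le hw x) (hD x)
      ((spectralWindow_sincSqProd ha hs).nonneg x) (by positivity)

end EvenProfile

section SincPow

/-- The window `sinc (x / 4N) ^ 2N`, of bandwidth `1 / 2` for every `N ≥ 1`. -/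
noncomputable def sincPow (N : ℕ) (x : ℝ) : ℝ :=
  Real.sinc ((4 * N : ℝ)⁻¹ * x) ^ (2 * N)

variable {N : ℕ}

lemma spectralWindow_sincPow (hN : 0 < N) : SpectralWindow (sincPow N) (1 / 2) := by
  have hw : 0 < (4 * N : ℝ)⁻¹ := by positivity
  convert SpectralWindow.prod (Finset.range N) fun _ _ => .sinc_sq hw using 1
  · ext x
    rw [Finset.prod_const, Finset.card_range, ← pow_mul, sincPow]
  · rw [Finset.sum_const, Finset.card_range, nsmul_eq_mul]
    field_simp
    norm_num

lemma half_le_sincPow (hN : 0 < N) {x : ℝ} (hx : |x| ≤ 1) : 1 / 2 ≤ sincPow N x := by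
  have hN' : (1 : ℝ) ≤ N := mod_cast hN
  have hinv : (4 * N : ℝ)⁻¹ ≤ 1 := inv_le_one_of_one_le₀ (by linarith)
  have hsinc : 1 + -(4 * N : ℝ)⁻¹ ≤ Real.sinc ((4 * N : ℝ)⁻¹ * x) := by
    refine le_trans ?_ (one_sub_abs_le_sinc _)
    rw [abs_mul, abs_of_pos (by positivity : 0 < (4 * N : ℝ)⁻¹), sub_eq_add_neg]
    gcongr
    exact mul_le_of_le_one_right (by positivity) hx
  calc (1 / 2 : ℝ) = 1 + (2 * N : ℕ) * -(4 * N : ℝ)⁻¹ := by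
        push_cast
        field_simp
        norm_num
    _ ≤ (1 + -(4 * N : ℝ)⁻¹) ^ (2 * N) := one_add_mul_le_pow (by linarith) _
    _ ≤ sincPow N x := pow_le_pow_left₀ (by linarith) hsinc _

lemma one_add_abs_pow_mul_sincPow_le {j : ℕ} (hN : 0 < N) (hj : j ≤ N) (x : ℝ) :
    (1 + |x|) ^ j * sincPow N x ≤ (5 * N) ^ j := by
  have hN' : (1 : ℝ) ≤ N := mod_cast hN
  set s := |Real.sinc ((4 * N : ℝ)⁻¹ * x)| with hs
  have hfactor : (1 + |x|) * s ≤ 5 * N := by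
    have h := one_add_abs_mul_abs_sinc_le (by positivity : 0 < (4 * N : ℝ)⁻¹) x
    rw [inv_inv] at h
    linarith
  calc (1 + |x|) ^ j * sincPow N x = ((1 + |x|) * s) ^ j * s ^ (2 * N - j) := by
        rw [sincPow, ← (even_two_mul N).pow_abs, ← hs, mul_pow, mul_assoc, ← pow_add,
          Nat.add_sub_cancel' (by lia)]
    _ ≤ ((1 + |x|) * s) ^ j :=
        mul_le_of_le_one_right (by positivity) (pow_le_one₀ (abs_nonneg _) (Real.abs_sinc_le_one _))
    _ ≤ (5 * N) ^ j := by gcongr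

end SincPow

section MulSincPow

variable {P : ℝ → ℝ} {r : ℝ} {N : ℕ}

lemma EvenProfile.integral_one_add_abs_pow_mul_sincPow_mul_le {j : ℕ} (hP : EvenProfile P r)
    (hN : 0 < N) (hj : j ≤ N) :
    ∫ u, (1 + |u|) ^ (j + 1) * (sincPow N u * P u) ≤ (5 * N) ^ j * ∫ u, (1 + |u|) * P u := by
  rw [← integral_const_mul]
  refine integral_mono
    ((hP.spectralWindow_mul (spectralWindow_sincPow hN)).integrable_one_add_abs_pow_mul (j + 1))
    (by simpa using (hP.integrable_one_add_abs_pow_mul 1).const_mul _) fun u => ?_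
  calc (1 + |u|) ^ (j + 1) * (sincPow N u * P u)
      = (1 + |u|) ^ j * sincPow N u * ((1 + |u|) * P u) := by ring
    _ ≤ (5 * N) ^ j * ((1 + |u|) * P u) :=
        mul_le_mul_of_nonneg_right (one_add_abs_pow_mul_sincPow_le hN hj u)
          (mul_nonneg (by positivity) (hP.nonneg u))

lemma EvenProfile.half_setIntegral_le_integral_sincPow_mul (hP : EvenProfile P r) (hN : 0 < N) :
    1 / 2 * ∫ u in Set.Icc (-1) 1, P u ≤ ∫ u, sincPow N u * P u := by
  have hQ := hP.spectralWindow_mul (spectralWindow_sincPow hN)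
  calc 1 / 2 * ∫ u in Set.Icc (-1) 1, P u = ∫ u in Set.Icc (-1) 1, 1 / 2 * P u :=
        (integral_const_mul _ _).symm
    _ ≤ ∫ u in Set.Icc (-1) 1, sincPow N u * P u :=
        setIntegral_mono_on (hP.integrable.const_mul _).integrableOn hQ.integrable.integrableOn
          measurableSet_Icc fun u hu =>
            mul_le_mul_of_nonneg_right (half_le_sincPow hN (abs_le.2 hu)) (hP.nonneg u)
    _ ≤ ∫ u, sincPow N u * P u := setIntegral_le_integral hQ.integrable (.of_forall hQ.nonneg)

lemma EvenProfile.exists_pos_le_integral_sincPow_mul (hP : EvenProfile P r) (h0 : 0 < P 0) :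
    ∃ κ > 0, ∀ {N : ℕ}, 0 < N → κ ≤ ∫ u, sincPow N u * P u := by
  have hpos : 0 < ∫ u in Set.Icc (-1) 1, P u := by
    rw [integral_Icc_eq_integral_Ioc, ← intervalIntegral.integral_of_le (by norm_num)]
    exact intervalIntegral.integral_pos (by norm_num) hP.continuous.continuousOn
      (fun u _ => hP.nonneg u) ⟨0, by norm_num, h0⟩
  exact ⟨_, half_pos hpos, fun hN => by
    simpa [inv_mul_eq_div] using hP.half_setIntegral_le_integral_sincPow_mul hN⟩

lemma EvenProfile.abs_signedKernel_sincPow_mul_le {γ D κ : ℝ} (hP : EvenProfile P r)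
    (hγ0 : 0 ≤ γ) (hγ1 : γ ≤ 1) (hD : ∀ u, (1 + |u|) * P u ≤ D * Real.exp (-|u| ^ γ))
    (hN : 0 < N) (hκ : 0 < κ) (hκQ : κ ≤ ∫ u, sincPow N u * P u) (y : ℝ) :
    |signedKernel (fun u => sincPow N u * P u) y|
      ≤ κ⁻¹ * (D * Real.exp 1) * Real.exp (-|y| ^ γ) := by
  have hS := spectralWindow_sincPow hN
  have hD0 : 0 ≤ D := by
    have h := (mul_nonneg (by positivity) (hP.nonneg 0)).trans (hD 0)
    exact nonneg_of_mul_nonneg_left h (Real.exp_pos _)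
  refine ((hP.spectralWindow_mul hS).abs_signedKernel_le hγ0 hγ1 (fun u => ?_) y).trans (by gcongr)
  refine (mul_le_mul_of_nonneg_left ?_ (by positivity)).trans (hD u)
  exact mul_le_of_le_one_left (hP.nonneg u) (hS.le_one u)

lemma five_mul_succ_pow_le {j n : ℕ} (hj : j ≤ n) :
    (5 * (n + 1 : ℕ) : ℝ) ^ j ≤ 124 ^ j * (n : ℝ) ^ j := by
  rcases n.eq_zero_or_pos with rfl | hn
  · simp [Nat.le_zero.1 hj]
  · have hn' : (1 : ℝ) ≤ n := mod_cast hn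
    rw [← mul_pow]
    refine pow_le_pow_left₀ (by positivity) ?_ j
    push_cast
    linarith

lemma EvenProfile.norm_iteratedDeriv_signedKernel_sincPow_mul_le {j : ℕ} {κ : ℝ}
    (hP : EvenProfile P r) (hN : 0 < N) (hj : j ≤ N) (hκ : 0 < κ)
    (hκQ : κ ≤ ∫ u, sincPow N u * P u) (t : ℝ) :
    ‖iteratedDeriv j (fun t' : ℝ => ∫ x : ℝ, Complex.exp (-(↑(t' * x)) * Complex.I) *
        (signedKernel (fun u => sincPow N u * P u) x : ℂ)) t‖
      ≤ κ⁻¹ * ((5 * N) ^ j * ∫ u, (1 + |u|) * P u) := by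
  have hQ := hP.spectralWindow_mul (spectralWindow_sincPow hN)
  refine (hQ.norm_iteratedDeriv_signedKernel_le j t).trans ?_
  have hnonneg : 0 ≤ ∫ u, (1 + |u|) ^ (j + 1) * (sincPow N u * P u) :=
    integral_nonneg fun u => mul_nonneg (by positivity) (hQ.nonneg u)
  gcongr
  exact hP.integral_one_add_abs_pow_mul_sincPow_mul_le hN hj

lemma EvenProfile.norm_iteratedDeriv_signedKernel_sincPow_succ_mul_le {n j : ℕ} {κ M : ℝ}
    (hP : EvenProfile P r) (hj : j ≤ n) (hκ : 0 < κ) (hκQ : κ ≤ ∫ u, sincPow (n + 1) u * P u)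
    (hM : ∫ u, (1 + |u|) * P u ≤ M) (t : ℝ) :
    ‖iteratedDeriv j (fun t' : ℝ => ∫ x : ℝ, Complex.exp (-(↑(t' * x)) * Complex.I) *
        (signedKernel (fun u => sincPow (n + 1) u * P u) x : ℂ)) t‖
      ≤ κ⁻¹ * M * 124 ^ j * n ^ j := by
  have hM0 : 0 ≤ ∫ u, (1 + |u|) * P u :=
    integral_nonneg fun u => mul_nonneg (by positivity) (hP.nonneg u)
  refine (hP.norm_iteratedDeriv_signedKernel_sincPow_mul_le n.succ_pos (hj.trans n.le_succ) hκ
    hκQ t).trans ?_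
  rw [mul_assoc, mul_assoc κ⁻¹, mul_comm M]
  gcongr
  exact five_mul_succ_pow_le hj

end MulSincPow

end BandLimitedKernel

open BandLimitedKernel in
/-- Lemma 3.2: existence of a sequence of real-valued Schwartz test functions `φ_n` with
integral one, exponential decay `exp(-|y|^γ)`, non-negative `y·φ_n(y)`, Fourier transform
supported in `[-1,1]` and controlled derivatives `|φ̂_n^{(j)}(t)| ≤ C A^j n^j` for `j ≤ n`. -/
theorem stmt_2 (γ : ℝ) (hγ0 : 0 < γ) (hγ1 : γ < 1) :
    ∃ (φ : ℕ → SchwartzMap ℝ ℝ) (Cγ C A : ℝ), 0 < Cγ ∧ 0 < C ∧ 0 < A ∧ A = 124 ∧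
      ∀ n : ℕ,
        (∫ y, φ n y) = 1 ∧
        (∀ y : ℝ, |φ n y| ≤ Cγ * Real.exp (-(|y| ^ γ))) ∧
        (∀ y : ℝ, 0 ≤ y * φ n y) ∧
        (∀ t : ℝ, 1 < |t| →
          (∫ x : ℝ, Complex.exp (-(↑(t * x)) * Complex.I) * (φ n x : ℂ)) = 0) ∧
        (∀ j ≤ n, ∀ t ∈ Set.Icc (-1:ℝ) 1,
          ‖iteratedDeriv j
              (fun t' : ℝ => ∫ x : ℝ, Complex.exp (-(↑(t' * x)) * Complex.I) * (φ n x : ℂ))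
              t‖ ≤ C * A ^ j * (n : ℝ) ^ j) := by
  obtain ⟨P, D, hP, hP0, hD⟩ := exists_evenProfile_le_exp_neg_rpow hγ0 hγ1 one_half_pos
  obtain ⟨κ, hκ, hκQ⟩ := hP.exists_pos_le_integral_sincPow_mul (hP0 ▸ one_pos)
  have hQ (n : ℕ) : EvenProfile (fun x => sincPow (n + 1) x * P x) 1 := by
    simpa only [add_halves] using hP.spectralWindow_mul (spectralWindow_sincPow n.succ_pos)
  choose φ hφ using fun n => (hQ n).exists_schwartzMap_signedKernel
  have hDpos : 0 < D := one_pos.trans_le (by simpa [hP0, hγ0.ne'] using hD 0)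
  refine ⟨φ, κ⁻¹ * (D * Real.exp 1), κ⁻¹ * max 1 (∫ u, (1 + |u|) * P u), 124, by positivity,
    by positivity, by norm_num, rfl, fun n => ?_⟩
  simp only [hφ]
  exact ⟨(hQ n).integral_signedKernel (hκ.trans_le (hκQ n.succ_pos)),
    hP.abs_signedKernel_sincPow_mul_le hγ0.le hγ1.le hD n.succ_pos hκ (hκQ n.succ_pos),
    (hQ n).mul_signedKernel_nonneg,
    fun _ ht => (hQ n).bandLimited_signedKernel.integral_exp_mul_eq_zero ht,
    fun _ hj t _ => hP.norm_iteratedDeriv_signedKernel_sincPow_succ_mul_le hj hκ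
      (hκQ n.succ_pos) (le_max_right _ _) t⟩
end
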